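/- arXiv:2405.06122 — 8 statements merged into one kernel-verified Lean document; each statement's English description precedes it below -/
import Mathlib

section
/- Let R be a (unital, possibly noncommutative) ring and M a free left R-module. Then the following three conditions are equivalent: (1) M is Hopfian, i.e. every surjective R-linear endomorphism f : M → M is injective; (2) the endomorphism ring of M is Dedekind-finite, i.e. for all R-linear endomorphisms f, g of M, f ∘ g = id implies g ∘ f = id; (3) for every R-module N, if M is R-linearly isomorphic to the product module M × N, then N is trivial (every element of N equals 0). -/
/-!
If `f ∘ g = id` then `M ≃ M × ker f` with `f` as first projection, and conversely an isomorphism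
`M ≃ M × N` gives such a pair `f, g` with `ker f ≃ N`. So one-sided inverses in the endomorphism
ring are two-sided exactly when no nonzero complement can occur. When `M` is projective, every
surjective endomorphism has a right inverse.
-/

/-- A Hopfian module: one that is not isomorphic to a proper quotient of itself, expressed through
its surjective endomorphisms. -/
def IsHopfian (R M : Type*) [Semiring R] [AddCommMonoid M] [Module R M] : Prop :=
  ∀ f : M →ₗ[R] M, Function.Surjective f → Function.Injective f

section Semiring

variable {R M : Type*} [Semiring R] [AddCommMonoid M] [Module R M]

theorem isDedekindFiniteMonoid_end_iff :
    IsDedekindFiniteMonoid (Module.End R M) ↔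
      ∀ f g : M →ₗ[R] M, f ∘ₗ g = LinearMap.id → g ∘ₗ f = LinearMap.id :=
  ⟨fun _ _ _ hfg => mul_eq_one_symm hfg, fun h => ⟨h _ _⟩⟩

theorem isDedekindFiniteMonoid_end_iff_injective :
    IsDedekindFiniteMonoid (Module.End R M) ↔
      ∀ f g : M →ₗ[R] M, f ∘ₗ g = LinearMap.id → Function.Injective f := by
  refine isDedekindFiniteMonoid_end_iff.trans
    (forall₃_congr fun f g hfg => ⟨fun hgf => ?_, fun hf => ?_⟩)
  · exact Function.LeftInverse.injective (LinearMap.congr_fun hgf)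
  · have hgf : Function.RightInverse g f := LinearMap.congr_fun hfg
    exact LinearMap.ext (hgf.leftInverse_of_injective hf)

theorem isHopfian_iff_isDedekindFiniteMonoid_end [Module.Projective R M] :
    IsHopfian R M ↔ IsDedekindFiniteMonoid (Module.End R M) := by
  rw [isDedekindFiniteMonoid_end_iff_injective]
  refine ⟨fun hM f g hfg => ?_, fun hM f hf => ?_⟩
  · exact hM f (Function.RightInverse.surjective (LinearMap.congr_fun hfg))
  · obtain ⟨g, hfg⟩ := Module.projective_lifting_property f LinearMap.id hf
    exact hM f g hfg

theorem eq_zero_of_linearEquiv_prod [IsDedekindFiniteMonoid (Module.End R M)]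
    {N : Type*} [AddCommMonoid N] [Module R N] (e : M ≃ₗ[R] M × N) (x : N) : x = 0 := by
  let f : M →ₗ[R] M := LinearMap.fst R M N ∘ₗ e
  let g : M →ₗ[R] M := e.symm ∘ₗ LinearMap.inl R M N
  have hfg : f ∘ₗ g = LinearMap.id := by ext; simp [f, g]
  have hf : Function.Injective f := isDedekindFiniteMonoid_end_iff_injective.mp ‹_› f g hfg
  have hx : e.symm (0, x) = 0 := hf (by simp [f])
  simpa using hx

end Semiring

section Ring

universe v

variable {R : Type*} [Ring R]

theorem nonempty_linearEquiv_prod_ker {M P : Type*} [AddCommGroup M] [Module R M]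
    [AddCommGroup P] [Module R P] {f : M →ₗ[R] P} {g : P →ₗ[R] M} (hfg : f ∘ₗ g = LinearMap.id) :
    Nonempty (M ≃ₗ[R] P × LinearMap.ker f) := by
  obtain ⟨e, -⟩ := f.exact_subtype_ker_map.splitSurjectiveEquiv
    (LinearMap.ker f).injective_subtype ⟨g, hfg⟩
  exact ⟨e.trans (LinearEquiv.prodComm R _ _)⟩

variable {M : Type v} [AddCommGroup M] [Module R M]

theorem isDedekindFiniteMonoid_end_iff_cancel :
    IsDedekindFiniteMonoid (Module.End R M) ↔
      ∀ (N : Type v) [AddCommGroup N] [Module R N],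
        Nonempty (M ≃ₗ[R] (M × N)) → ∀ x : N, x = 0 := by
  refine ⟨fun _ N _ _ ⟨e⟩ => eq_zero_of_linearEquiv_prod e, fun hM => ?_⟩
  refine isDedekindFiniteMonoid_end_iff_injective.mpr fun f g hfg => ?_
  have hker : ∀ x : LinearMap.ker f, x = 0 := hM _ (nonempty_linearEquiv_prod_ker hfg)
  exact (injective_iff_map_eq_zero f).mpr fun x hx => congrArg Subtype.val (hker ⟨x, hx⟩)

theorem hopfian_iff_dedekindFinite_iff_cancel_general [Module.Projective R M] :
    (IsHopfian R M ↔ IsDedekindFiniteMonoid (Module.End R M)) ∧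
    (IsHopfian R M ↔
      ∀ (N : Type v) [AddCommGroup N] [Module R N],
        Nonempty (M ≃ₗ[R] (M × N)) → ∀ x : N, x = 0) :=
  ⟨isHopfian_iff_isDedekindFiniteMonoid_end,
    isHopfian_iff_isDedekindFiniteMonoid_end.trans isDedekindFiniteMonoid_end_iff_cancel⟩

end Ring

/-- For a free left module `M` over a (possibly noncommutative) ring `R`,
the following are equivalent:
(1) `M` is Hopfian (every surjective `R`-linear endomorphism is injective);
(2) the endomorphism ring of `M` is Dedekind-finite;
(3) `M ≃ₗ[R] M × N` forces `N` to be trivial. -/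
theorem hopfian_iff_dedekindFinite_iff_cancel
    {R : Type*} [Ring R] {M : Type v} [AddCommGroup M] [Module R M] [Module.Free R M] :
    ((∀ f : M →ₗ[R] M, Function.Surjective f → Function.Injective f) ↔
      (∀ f g : M →ₗ[R] M, f ∘ₗ g = LinearMap.id → g ∘ₗ f = LinearMap.id)) ∧
    ((∀ f : M →ₗ[R] M, Function.Surjective f → Function.Injective f) ↔
      (∀ (N : Type v) [AddCommGroup N] [Module R N],
        Nonempty (M ≃ₗ[R] (M × N)) → ∀ x : N, x = 0)) := by
  simpa only [IsHopfian, isDedekindFiniteMonoid_end_iff] using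
    hopfian_iff_dedekindFinite_iff_cancel_general (R := R) (M := M)
end

section
/- Let R be a stably finite ring and let v₀, v₁, v₂, v₃ ∈ (Fin 3 → R) be such that the 3×3 matrix with rows v₀, v₁, v₂ is a unit in Matrix (Fin 3) (Fin 3) R, and the 3×3 matrix with rows v₁, v₂, v₃ is also a unit. Let P be the submodule ((span R {v₀}) ⊔ (span R {v₁})) ⊓ ((span R {v₂}) ⊔ (span R {v₃})) of Fin 3 → R. Then P is a rank one subspace: there exists u ∈ (Fin 3 → R) with P = span R {u} and an R-linear map ξ : (Fin 3 → R) → R with ξ(u) = 1. (This is the statement that the lines through v₀, v₁ and through v₂, v₃ in the projective plane over R meet at a single point.) -/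
/-- A ring `R` is stably finite if for every `n`, every surjective `R`-linear
endomorphism of the free module `Fin n → R` is injective. -/
def StablyFinite (R : Type*) [Ring R] : Prop :=
  ∀ n : ℕ, ∀ f : (Fin n → R) →ₗ[R] (Fin n → R), Function.Surjective f → Function.Injective f

/-!
The line through `v₀, v₁` is the kernel of the coordinate `f` at `v₂` for the basis `v₀, v₁, v₂`.
Subtracting `f v₃ • v₂` from `v₃` moves it into this kernel without changing the line through
`v₂, v₃`, so by the modular law the two lines meet exactly in the span of `v₃ - f v₃ • v₂`.
A functional that vanishes at `v₂` and equals `1` at `v₃` takes the value `1` there, so this vector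
is unimodular.
-/

section Hyperplane

open Submodule

variable {R M : Type*} [Ring R] [AddCommGroup M] [Module R M]

lemma disjoint_span_singleton_ker {f : M →ₗ[R] R} {v : M} (hv : f v = 1) :
    Disjoint (span R {v}) (LinearMap.ker f) := by
  rw [disjoint_def]
  intro x hx hfx
  obtain ⟨a, rfl⟩ := mem_span_singleton.mp hx
  have ha : a = 0 := by simpa [hv] using hfx
  rw [ha, zero_smul]

lemma span_singleton_sup_span_singleton_sub_smul (v w : M) (a : R) :
    span R {v} ⊔ span R {w - a • v} = span R {v} ⊔ span R {w} := by
  refine le_antisymm (sup_le le_sup_left ?_) (sup_le le_sup_left ?_) <;>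
    rw [span_singleton_le_iff_mem, ← span_insert, mem_span_pair]
  · exact ⟨-a, 1, by rw [one_smul, neg_smul, neg_add_eq_sub]⟩
  · exact ⟨a, 1, by rw [one_smul, add_sub_cancel]⟩

lemma ker_inf_span_sup_span_eq_span_singleton {f : M →ₗ[R] R} {v : M} (hv : f v = 1) (w : M) :
    LinearMap.ker f ⊓ (span R {v} ⊔ span R {w}) = span R {w - f w • v} := by
  have hu : span R {w - f w • v} ≤ LinearMap.ker f := by
    simp [span_singleton_le_iff_mem, hv]
  calc LinearMap.ker f ⊓ (span R {v} ⊔ span R {w})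
      = (span R {w - f w • v} ⊔ span R {v}) ⊓ LinearMap.ker f := by
        rw [inf_comm, ← span_singleton_sup_span_singleton_sub_smul v w (f w), sup_comm (span R {v})]
    _ = span R {w - f w • v} ⊔ span R {v} ⊓ LinearMap.ker f := sup_inf_assoc_of_le _ hu
    _ = span R {w - f w • v} := by rw [(disjoint_span_singleton_ker hv).eq_bot, sup_bot_eq]

end Hyperplane

lemma ker_coord_eq_span_image_compl {ι R M : Type*} [Semiring R] [AddCommMonoid M] [Module R M]
    (b : Module.Basis ι R M) (i : ι) :
    LinearMap.ker (b.coord i) = Submodule.span R (b '' {i}ᶜ) := by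
  ext x
  rw [b.mem_span_image, LinearMap.mem_ker, b.coord_apply, Set.subset_compl_singleton_iff,
    Finset.mem_coe, Finsupp.notMem_support_iff]

lemma exists_basis_eq_row_of_isUnit {R n : Type*} [Semiring R] [Fintype n] [DecidableEq n]
    {A : Matrix n n R} (hA : IsUnit A) :
    ∃ b : Module.Basis n R (n → R), ⇑b = A.row := by
  obtain ⟨B, hAB, hBA⟩ := isUnit_iff_exists.mp hA
  refine ⟨(Pi.basisFun R n).map (Matrix.toLinearEquivRight'OfInv hBA hAB), funext fun i => ?_⟩
  rw [Module.Basis.map_apply, Pi.basisFun_apply]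
  exact Matrix.single_one_vecMul i A

theorem lines_meet_at_point_of_stablyFinite_general
    {R M : Type*} [Ring R] [AddCommGroup M] [Module R M] {v₀ v₁ v₂ v₃ : M}
    (h012 : ∃ b : Module.Basis (Fin 3) R M, ⇑b = ![v₀, v₁, v₂])
    (h23 : ∃ ξ : M →ₗ[R] R, ξ v₂ = 0 ∧ ξ v₃ = 1) :
    ∃ u : M,
      (Submodule.span R {v₀} ⊔ Submodule.span R {v₁}) ⊓
        (Submodule.span R {v₂} ⊔ Submodule.span R {v₃}) = Submodule.span R {u} ∧
      ∃ ξ : M →ₗ[R] R, ξ u = 1 := by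
  obtain ⟨b, hb⟩ := h012
  obtain ⟨ξ, hξ₂, hξ₃⟩ := h23
  have hline : Submodule.span R {v₀} ⊔ Submodule.span R {v₁} = LinearMap.ker (b.coord 2) := by
    have hcompl : ({2}ᶜ : Set (Fin 3)) = {0, 1} := by
      ext i
      fin_cases i <;> simp
    rw [ker_coord_eq_span_image_compl, hcompl, Set.image_pair, hb, Submodule.span_insert]
    rfl
  have hb₂ : b 2 = v₂ := congrFun hb 2
  have hv₂ : b.coord 2 v₂ = 1 := by simp [← hb₂]
  refine ⟨v₃ - b.coord 2 v₃ • v₂, ?_, ξ, by simp [hξ₂, hξ₃]⟩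
  rw [hline, ker_inf_span_sup_span_eq_span_singleton hv₂]

/-- Over a stably finite ring `R`, if the triples `v₀, v₁, v₂` and
`v₁, v₂, v₃` each form a basis of `Fin 3 → R` (equivalently, the matrices with
those rows are units), then the intersection of the lines
`span {v₀} ⊔ span {v₁}` and `span {v₂} ⊔ span {v₃}` is a rank one subspace:
it is the span of a unimodular element. -/
theorem lines_meet_at_point_of_stablyFinite
    {R : Type*} [Ring R] (hSF : StablyFinite R)
    (v₀ v₁ v₂ v₃ : Fin 3 → R)
    (h012 : IsUnit (Matrix.of ![v₀, v₁, v₂]))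
    (h123 : IsUnit (Matrix.of ![v₁, v₂, v₃])) :
    ∃ u : Fin 3 → R,
      (Submodule.span R {v₀} ⊔ Submodule.span R {v₁}) ⊓
        (Submodule.span R {v₂} ⊔ Submodule.span R {v₃}) = Submodule.span R {u} ∧
      ∃ ξ : (Fin 3 → R) →ₗ[R] R, ξ u = 1 := by
  obtain ⟨c, hc⟩ := exists_basis_eq_row_of_isUnit h123
  have hc₂ : c 1 = v₂ := congrFun hc 1
  have hc₃ : c 2 = v₃ := congrFun hc 2
  exact lines_meet_at_point_of_stablyFinite_general (exists_basis_eq_row_of_isUnit h012)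
    ⟨c.coord 2, by simp [← hc₂], by simp [← hc₃]⟩
end

section
/- Let v, p, w, q : Fin 3 → ℝ, and for a pair (u, r) of vectors in Fin 3 → ℝ let ζ(u, r) : Fin 3 → 𝔻 be the dual-number vector whose i-th entry is u i + ((u ×₃ r) i)·ε, where ×₃ is the cross product on Fin 3 → ℝ. Then the 𝔻-bilinear inner product Σᵢ ζ(v,p) i * ζ(w,q) i equals (Σᵢ v i * w i) + det(v, w, q − p)·ε, where det(v, w, q − p) is the determinant of the 3×3 real matrix with rows v, w, and q − p. -/
open scoped DualNumber

/-- The Study vector `ζ(u, r) : Fin 3 → 𝔻` of the affine line `{r + t u}` in `ℝ³`: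
its `i`-th entry is `u i + ((u ×₃ r) i)·ε`. -/
noncomputable def studyVector (u r : Fin 3 → ℝ) : Fin 3 → DualNumber ℝ :=
  fun i => TrivSqZeroExt.inl (u i) + TrivSqZeroExt.inl ((crossProduct u r) i) * DualNumber.eps

/-! Since `ε² = 0`, the `ε`-coefficient of the inner product is `v ⬝ᵥ (w ⨯₃ q) + (v ⨯₃ p) ⬝ᵥ w`.
A cyclic permutation and anticommutativity turn the second summand into `-(v ⬝ᵥ (w ⨯₃ p))`, so the
sum is the triple product of `v`, `w` and `q - p`. -/

section

open Matrix TrivSqZeroExt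

theorem inl_add_inl_mul_eps_mul {R : Type*} [Semiring R] (a b c d : R) :
    (inl a + inl b * ε : R[ε]) * (inl c + inl d * ε) = inl (a * c) + inl (a * d + b * c) * ε := by
  ext <;> simp

theorem sum_inl_add_inl_mul_eps_mul {R ι : Type*} [Semiring R] [Fintype ι] (a b c d : ι → R) :
    ∑ i, (inl (a i) + inl (b i) * ε : R[ε]) * (inl (c i) + inl (d i) * ε) =
      inl (a ⬝ᵥ c) + inl (a ⬝ᵥ d + b ⬝ᵥ c) * ε := by
  simp only [inl_add_inl_mul_eps_mul, dotProduct, ← Finset.sum_add_distrib, inl_sum,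
    Finset.sum_mul]

variable {R : Type*} [CommRing R]

theorem cross_dot_eq_neg_dot_cross (u v w : Fin 3 → R) : u ⨯₃ v ⬝ᵥ w = -(u ⬝ᵥ w ⨯₃ v) :=
  calc
    u ⨯₃ v ⬝ᵥ w = w ⬝ᵥ u ⨯₃ v := dotProduct_comm _ _
    _ = u ⬝ᵥ v ⨯₃ w := triple_product_permutation w u v
    _ = -(u ⬝ᵥ w ⨯₃ v) := by rw [← cross_anticomm, dotProduct_neg]

theorem dot_cross_add_cross_dot_eq_det (v p w q : Fin 3 → R) :
    v ⬝ᵥ w ⨯₃ q + v ⨯₃ p ⬝ᵥ w = (of ![v, w, q - p]).det :=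
  calc
    v ⬝ᵥ w ⨯₃ q + v ⨯₃ p ⬝ᵥ w = v ⬝ᵥ w ⨯₃ q - v ⬝ᵥ w ⨯₃ p := by
      rw [cross_dot_eq_neg_dot_cross, sub_eq_add_neg]
    _ = v ⬝ᵥ w ⨯₃ (q - p) := by rw [map_sub, dotProduct_sub]
    _ = (of ![v, w, q - p]).det := triple_product_eq_det v w (q - p)

theorem studyVector_inner_general (v p w q : Fin 3 → R) :
    ∑ i, (inl (v i) + inl ((v ⨯₃ p) i) * ε : R[ε]) * (inl (w i) + inl ((w ⨯₃ q) i) * ε) =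
      inl (∑ i, v i * w i) + inl (of ![v, w, q - p]).det * ε := by
  rw [sum_inl_add_inl_mul_eps_mul, dot_cross_add_cross_dot_eq_det, dotProduct]

end

/-- The `𝔻`-bilinear inner product of the Study vectors of two
affine lines `{p + t v}` and `{q + t w}` equals `⟨v, w⟩ + det(v, w, q − p)·ε`. -/
theorem studyVector_inner
    (v p w q : Fin 3 → ℝ) :
    ∑ i : Fin 3, studyVector v p i * studyVector w q i =
      TrivSqZeroExt.inl (∑ i : Fin 3, v i * w i) +
        TrivSqZeroExt.inl ((Matrix.of ![v, w, q - p]).det) * DualNumber.eps :=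
  studyVector_inner_general v p w q
end

section
/- Let v, p, w, q : Fin 3 → ℝ with v ≠ 0 and w ≠ 0, and let ζ(u, r) : Fin 3 → 𝔻 denote the dual-number vector with i-th entry u i + ((u ×₃ r) i)·ε. Then Σᵢ ζ(v,p) i * ζ(w,q) i = 0 in 𝔻 if and only if the affine lines {p + t v : t ∈ ℝ} and {q + t w : t ∈ ℝ} meet at a right angle, i.e. Σᵢ v i * w i = 0 and there exist s, t ∈ ℝ with p + s • v = q + t • w. (This is the incidence-preservation statement for the Study correspondence between the projective plane over the dual numbers and skewer geometry.) -/
open scoped DualNumber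

/-! The dual part of the inner product of two Study vectors is the triple product
`(q - p) ⬝ᵥ v ⨯₃ w`. For linearly independent `v`, `w` it vanishes exactly when `q - p` lies in
their span, that is, when the two lines have a common point; and nonzero orthogonal real vectors are
linearly independent. -/

open Matrix

lemma exists_add_smul_eq_add_smul_iff_sub_mem_span_pair {R M : Type*} [Ring R]
    [AddCommGroup M] [Module R M] {p q v w : M} :
    (∃ s t : R, p + s • v = q + t • w) ↔ q - p ∈ Submodule.span R {v, w} := by
  rw [Submodule.mem_span_pair]
  refine exists_congr fun s => (Equiv.neg R).exists_congr fun t => ?_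
  rw [Equiv.neg_apply, neg_smul, ← sub_eq_add_neg, eq_sub_iff_add_eq', ← add_sub_assoc,
    sub_eq_iff_eq_add]

lemma linearIndependent_pair_of_dotProduct_eq_zero {n R : Type*} [Fintype n] [CommRing R]
    [NoZeroDivisors R] {v w : n → R} (hv : v ⬝ᵥ v ≠ 0) (hw : w ⬝ᵥ w ≠ 0) (hvw : v ⬝ᵥ w = 0) :
    LinearIndependent R ![v, w] := by
  rw [LinearIndependent.pair_iff]
  intro s t hst
  have hs : s * (v ⬝ᵥ v) = 0 := by
    simpa [add_dotProduct, dotProduct_comm w v, hvw] using congrArg (· ⬝ᵥ v) hst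
  have ht : t * (w ⬝ᵥ w) = 0 := by
    simpa [add_dotProduct, hvw] using congrArg (· ⬝ᵥ w) hst
  exact ⟨(mul_eq_zero.mp hs).resolve_right hv, (mul_eq_zero.mp ht).resolve_right hw⟩

lemma dotProduct_crossProduct_eq_zero_iff_mem_span_pair {K : Type*} [Field K]
    {v w : Fin 3 → K} (hvw : LinearIndependent K ![v, w]) (d : Fin 3 → K) :
    d ⬝ᵥ v ⨯₃ w = 0 ↔ d ∈ Submodule.span K {v, w} :=
  calc d ⬝ᵥ v ⨯₃ w = 0
    _ ↔ ¬ IsUnit (of ![d, v, w]).det := by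
      rw [isUnit_iff_ne_zero, not_not, triple_product_eq_det]; rfl
    _ ↔ ¬ LinearIndependent K ![d, v, w] := by
      rw [← isUnit_iff_isUnit_det, ← linearIndependent_rows_iff_isUnit]; rfl
    _ ↔ d ∈ Submodule.span K {v, w} := by
      rw [← range_cons_cons_empty v w ![]]
      exact not_iff_comm.mp (linearIndependent_finCons.trans (and_iff_right hvw)).symm

lemma sub_dotProduct_crossProduct {R : Type*} [CommRing R] (v p w q : Fin 3 → R) :
    (q - p) ⬝ᵥ v ⨯₃ w = v ⬝ᵥ w ⨯₃ q + v ⨯₃ p ⬝ᵥ w := by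
  rw [sub_dotProduct, triple_product_permutation q, triple_product_permutation p,
    triple_product_permutation v w p, ← cross_anticomm v p, dotProduct_neg, sub_neg_eq_add,
    dotProduct_comm w]

lemma fst_studyVector (u r : Fin 3 → ℝ) (i : Fin 3) : (studyVector u r i).fst = u i := by
  simp [studyVector]

lemma snd_studyVector (u r : Fin 3 → ℝ) (i : Fin 3) :
    (studyVector u r i).snd = (u ⨯₃ r) i := by
  simp [studyVector]

lemma studyVector_dotProduct_studyVector (v p w q : Fin 3 → ℝ) :
    studyVector v p ⬝ᵥ studyVector w q =
      TrivSqZeroExt.inl (v ⬝ᵥ w) + TrivSqZeroExt.inr ((q - p) ⬝ᵥ v ⨯₃ w) := by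
  rw [sub_dotProduct_crossProduct]
  ext <;>
    simp [dotProduct, TrivSqZeroExt.fst_sum, TrivSqZeroExt.snd_sum, fst_studyVector,
      snd_studyVector, Finset.sum_add_distrib]

lemma studyVector_dotProduct_eq_zero_iff (v p w q : Fin 3 → ℝ) :
    studyVector v p ⬝ᵥ studyVector w q = 0 ↔ v ⬝ᵥ w = 0 ∧ (q - p) ⬝ᵥ v ⨯₃ w = 0 := by
  rw [studyVector_dotProduct_studyVector, TrivSqZeroExt.ext_iff]
  simp

/-- For nonzero `v, w`, the `𝔻`-bilinear inner product of the Study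
vectors of the affine lines `{p + t v}` and `{q + t w}` vanishes iff the lines
meet at a right angle, i.e. `⟨v, w⟩ = 0` and the lines have a common point. -/
theorem studyVector_inner_eq_zero_iff
    (v p w q : Fin 3 → ℝ) (hv : v ≠ 0) (hw : w ≠ 0) :
    (∑ i : Fin 3, studyVector v p i * studyVector w q i = 0) ↔
      ((∑ i : Fin 3, v i * w i = 0) ∧ ∃ s t : ℝ, p + s • v = q + t • w) := by
  change studyVector v p ⬝ᵥ studyVector w q = 0 ↔
    v ⬝ᵥ w = 0 ∧ ∃ s t : ℝ, p + s • v = q + t • w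
  rw [studyVector_dotProduct_eq_zero_iff, exists_add_smul_eq_add_smul_iff_sub_mem_span_pair]
  refine and_congr_right fun hvw => ?_
  have hind : LinearIndependent ℝ ![v, w] :=
    linearIndependent_pair_of_dotProduct_eq_zero
      (dotProduct_self_eq_zero.not.mpr hv) (dotProduct_self_eq_zero.not.mpr hw) hvw
  exact dotProduct_crossProduct_eq_zero_iff_mem_span_pair hind (q - p)
end

section
/- Let R be a ring, d ≥ 1, and let α : Fin (d+1) → (ℤ → R) define a properly bounded difference operator D' of degree d (so α 0 j and α d j are units for all j). Let β : Fin d → (ℤ → R) be coefficients of a difference operator D of degree less than d, and suppose D is not the zero operator, i.e. β i j ≠ 0 for some i, j. Then there exists a sequence a : ℤ → R with Σ_{i=0}^{d} α i j * a (j + i) = 0 for all j, but Σ_{i=0}^{d-1} β i j * a (j + i) ≠ 0 for some j. (That is, the kernel of a properly bounded operator of degree d is not contained in the kernel of any nonzero operator of smaller degree.) -/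
/-!
Since the extreme coefficients of a properly bounded operator of degree `d` can be divided by, any
`d` consecutive values extend, one step at a time in both directions, to a sequence in its kernel.
If `β i₀ j₀ ≠ 0`, prescribe the value `1` at `j₀ + i₀` and `0` at the other integers of
`[j₀, j₀ + d)`. The operator of smaller degree reads only these `d` entries at `j₀`, so there it
takes the value `β i₀ j₀`.
-/

theorem exists_int_chain {X : Type*} (r : ℤ → X → X → Prop)
    (hfwd : ∀ j x, ∃ y, r j x y) (hbwd : ∀ j y, ∃ x, r j x y) (j₀ : ℤ) (x₀ : X) :
    ∃ w : ℤ → X, w j₀ = x₀ ∧ ∀ j, r j (w j) (w (j + 1)) := by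
  choose next hnext using hfwd
  choose prev hprev using hbwd
  let w : ℤ → X := fun j =>
    Int.inductionOn' (motive := fun _ => X) j j₀ x₀
      (fun k _ x => next k x) (fun k _ y => prev (k - 1) y)
  refine ⟨w, Int.inductionOn'_self, fun j => ?_⟩
  rcases le_or_gt j₀ j with hj | hj
  · have hw : w (j + 1) = next j (w j) := Int.inductionOn'_add_one hj
    exact hw ▸ hnext j (w j)
  · have hw : w (j + 1 - 1) = prev (j + 1 - 1) (w (j + 1)) := Int.inductionOn'_sub_one (by lia)
    rw [add_sub_cancel_right] at hw
    exact hw ▸ hprev j (w (j + 1))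

section Windows

variable {X : Type*} {d : ℕ}

theorem apply_add_zero_eq_apply_of_tail_eq_init {u : ℤ → Fin (d + 1) → X}
    (hu : ∀ j, Fin.tail (u j) = Fin.init (u (j + 1))) (j : ℤ) (i : Fin (d + 1)) :
    u (j + (i.val : ℤ)) 0 = u j i := by
  induction i using Fin.induction generalizing j with
  | zero => simp
  | succ i ih =>
    calc u (j + (i.succ.val : ℤ)) 0 = u (j + 1 + (i.castSucc.val : ℤ)) 0 := by
          rw [Fin.val_succ, Fin.val_castSucc, Nat.cast_succ, add_right_comm, add_assoc]
      _ = u (j + 1) i.castSucc := ih (j + 1)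
      _ = u j i.succ := (congrFun (hu j) i).symm

theorem exists_int_seq_eq_on_window (r : ℤ → (Fin (d + 1) → X) → Prop)
    (hsnoc : ∀ j (v : Fin d → X), ∃ x : X, r j (Fin.snoc v x))
    (hcons : ∀ j (v : Fin d → X), ∃ x : X, r j (Fin.cons x v)) (j₀ : ℤ) (v : Fin d → X) :
    ∃ a : ℤ → X, (∀ j, r j fun i => a (j + (i.val : ℤ))) ∧
      ∀ i : Fin d, a (j₀ + (i.val : ℤ)) = v i := by
  obtain ⟨w, hw, hchain⟩ := exists_int_chain
    (fun j (x y : Fin d → X) =>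
      ∃ u : Fin (d + 1) → X, Fin.init u = x ∧ Fin.tail u = y ∧ r j u)
    (fun j x =>
      let ⟨c, hc⟩ := hsnoc j x
      ⟨_, Fin.snoc x c, Fin.init_snoc (α := fun _ => X) c x, rfl, hc⟩)
    (fun j y =>
      let ⟨c, hc⟩ := hcons j y
      ⟨_, Fin.cons c y, rfl, Fin.tail_cons (α := fun _ => X) c y, hc⟩)
    j₀ v
  choose u hinit htail hr using hchain
  have hu : ∀ j i, u (j + (i.val : ℤ)) 0 = u j i :=
    apply_add_zero_eq_apply_of_tail_eq_init fun j => (htail j).trans (hinit (j + 1)).symm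
  refine ⟨fun j => u j 0, fun j => by simpa only [hu] using hr j, fun i => ?_⟩
  calc u (j₀ + (i.val : ℤ)) 0 = Fin.init (u j₀) i := hu j₀ i.castSucc
    _ = v i := by rw [hinit, hw]

end Windows

section DifferenceEquations

variable {R M : Type*} [Semiring R] [AddCommGroup M] [Module R M] {d : ℕ}

theorem exists_sum_smul_snoc_eq (c : Fin (d + 1) → R)
    (hc : Function.Surjective fun x : M => c (Fin.last d) • x) (v : Fin d → M) (b : M) :
    ∃ x : M, ∑ i, c i • (Fin.snoc v x : Fin (d + 1) → M) i = b := by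
  obtain ⟨x, hx : c (Fin.last d) • x = b - ∑ i : Fin d, c i.castSucc • v i⟩ := hc _
  exact ⟨x, by simp [Fin.sum_univ_castSucc, hx]⟩

theorem exists_sum_smul_cons_eq (c : Fin (d + 1) → R)
    (hc : Function.Surjective fun x : M => c 0 • x) (v : Fin d → M) (b : M) :
    ∃ x : M, ∑ i, c i • (Fin.cons x v : Fin (d + 1) → M) i = b := by
  obtain ⟨x, hx : c 0 • x = b - ∑ i : Fin d, c i.succ • v i⟩ := hc _
  exact ⟨x, by simp [Fin.sum_univ_succ, hx]⟩

theorem exists_sum_smul_eq_and_eq_on_window (α : Fin (d + 1) → ℤ → R)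
    (h0 : ∀ j, Function.Surjective fun x : M => α 0 j • x)
    (hlast : ∀ j, Function.Surjective fun x : M => α (Fin.last d) j • x)
    (b : ℤ → M) (j₀ : ℤ) (v : Fin d → M) :
    ∃ a : ℤ → M, (∀ j, ∑ i, α i j • a (j + (i.val : ℤ)) = b j) ∧
      ∀ i : Fin d, a (j₀ + (i.val : ℤ)) = v i :=
  exists_int_seq_eq_on_window (fun j u => ∑ i, α i j • u i = b j)
    (fun j v => exists_sum_smul_snoc_eq (α · j) (hlast j) v (b j))
    (fun j v => exists_sum_smul_cons_eq (α · j) (h0 j) v (b j)) j₀ v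

theorem exists_mem_kernel_not_in_kernel_of_lower_degree_general (α : Fin (d + 1) → ℤ → R)
    (h0 : ∀ j, Function.Surjective fun x : M => α 0 j • x)
    (hlast : ∀ j, Function.Surjective fun x : M => α (Fin.last d) j • x)
    (β : Fin d → ℤ → R) (hβ : ∃ i j, ∃ x : M, β i j • x ≠ 0) :
    ∃ a : ℤ → M, (∀ j, ∑ i, α i j • a (j + (i.val : ℤ)) = 0) ∧
      ∃ j, ∑ i, β i j • a (j + (i.val : ℤ)) ≠ 0 := by
  obtain ⟨i₀, j₀, x, hx⟩ := hβ
  obtain ⟨a, ha, hwindow⟩ := exists_sum_smul_eq_and_eq_on_window α h0 hlast 0 j₀ (Pi.single i₀ x)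
  have hvalue : ∑ i, β i j₀ • a (j₀ + (i.val : ℤ)) = β i₀ j₀ • x := by
    simp [hwindow, Pi.single_apply]
  exact ⟨a, ha, j₀, hvalue ▸ hx⟩

end DifferenceEquations

/-- The kernel of a properly bounded difference operator of degree
`d` is not contained in the kernel of any nonzero difference operator of degree
less than `d`. -/
theorem exists_mem_kernel_not_in_kernel_of_lower_degree
    {R : Type*} [Ring R] {d : ℕ} (hd : 1 ≤ d) (α : Fin (d + 1) → ℤ → R)
    (h0 : ∀ j : ℤ, IsUnit (α 0 j)) (hdu : ∀ j : ℤ, IsUnit (α (Fin.last d) j))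
    (β : Fin d → ℤ → R) (hβ : ∃ i : Fin d, ∃ j : ℤ, β i j ≠ 0) :
    ∃ a : ℤ → R,
      (∀ j : ℤ, ∑ i : Fin (d + 1), α i j * a (j + (i.val : ℤ)) = 0) ∧
      ∃ j : ℤ, ∑ i : Fin d, β i j * a (j + (i.val : ℤ)) ≠ 0 := by
  obtain ⟨i₀, j₀, hne⟩ := hβ
  exact exists_mem_kernel_not_in_kernel_of_lower_degree_general α
    (fun j => (h0 j).smul_bijective.surjective) (fun j => (hdu j).smul_bijective.surjective) β
    ⟨i₀, j₀, 1, by simpa using hne⟩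
end

section
/- Let R be a stably finite ring, d ≥ 1, and let α, α' : Fin (d+1) → (ℤ → R) each define properly bounded difference operators D, D' of degree d (all α 0 j, α d j, α' 0 j, α' d j are units). Suppose D and D' have the same kernel: for every a : ℤ → R, (∀ j, Σ_{i=0}^{d} α i j * a (j + i) = 0) holds if and only if (∀ j, Σ_{i=0}^{d} α' i j * a (j + i) = 0). Then D' is obtained from D by left multiplication by a sequence of units: there exists c : ℤ → Rˣ such that α' i j = (c j) * α i j for all i ∈ Fin (d+1) and all j ∈ ℤ. -/
/-!
If the outer coefficients of `D` are right invertible, then any window of `d + 1` values on which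
the equation `(D a) j = 0` holds extends to a solution of `D a = 0`: solve for the next value with
the leading coefficient and for the previous one with the trailing coefficient. Hence
`ker D ⊆ ker D'` already forces the `j`-th row of `D'` to annihilate every vector annihilated by
the `j`-th row of `D`. As the row of `D` takes the value `1` at some vector `r`, the row of `D'` is
its own value at `r` times the row of `D`. Comparing leading coefficients shows that this factor
is a unit.
-/

open Matrix MulOpposite

theorem isUnit_left_of_isUnit_mul_of_mul_eq_one {M : Type*} [Monoid M] {c x s : M}
    (hcx : IsUnit (c * x)) (hxs : x * s = 1) : IsUnit c := by
  have hx : IsUnit x := by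
    obtain ⟨t, ht⟩ := hcx.exists_left_inv
    exact isUnit_iff_exists_and_exists.2 ⟨⟨s, hxs⟩, ⟨t * c, by rw [mul_assoc, ht]⟩⟩
  exact (hx.unit.isUnit_mul_units c).1 hcx

section Chains

variable {X : Type*} {P : ℤ → X → Prop} {r : X → X → Prop}

theorem exists_int_chain_s16
    (hnext : ∀ k x, P k x → ∃ y, P (k + 1) y ∧ r x y)
    (hprev : ∀ k y, P (k + 1) y → ∃ x, P k x ∧ r x y) {j : ℤ} {x₀ : X} (hx₀ : P j x₀) :
    ∃ f : ℤ → X, f j = x₀ ∧ (∀ k, P k (f k)) ∧ ∀ k, r (f k) (f (k + 1)) := by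
  have hprev' (k : ℤ) (y : X) (hy : P k y) : ∃ x, P (k - 1) x ∧ r x y :=
    hprev (k - 1) y (by rwa [sub_add_cancel])
  choose next hPnext hrnext using hnext
  choose prev hPprev hrprev using hprev'
  let f (k : ℤ) : {x // P k x} :=
    Int.inductionOn' k j ⟨x₀, hx₀⟩
      (fun k _ x => ⟨next k x x.2, hPnext k x x.2⟩) (fun k _ x => ⟨prev k x x.2, hPprev k x x.2⟩)
  have hfj : (f j : X) = x₀ := by
    simp only [f, Int.inductionOn'_self]
  have hfr (k : ℤ) : r (f k) (f (k + 1)) := by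
    rcases le_or_gt j k with hjk | hkj
    · have hf : (f (k + 1) : X) = next k (f k) (f k).2 := by
        simp only [f, Int.inductionOn'_add_one hjk]
      rw [hf]
      exact hrnext k _ _
    · obtain ⟨k, rfl⟩ : ∃ m, k = m - 1 := ⟨k + 1, by ring⟩
      have hf : (f (k - 1) : X) = prev k (f k) (f k).2 := by
        simp only [f, Int.inductionOn'_sub_one (show k ≤ j by omega)]
      rw [sub_add_cancel, hf]
      exact hrprev k _ _
  exact ⟨fun k => f k, hfj, fun k => (f k).2, hfr⟩

end Chains

section Rows

variable {R : Type*} [Ring R]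

theorem eq_dotProduct_smul_of_forall_dotProduct_eq_zero {ι : Type*} [Fintype ι]
    {u v r : ι → R} (hr : u ⬝ᵥ r = 1) (huv : ∀ w, u ⬝ᵥ w = 0 → v ⬝ᵥ w = 0) :
    v = (v ⬝ᵥ r) • u := by
  classical
  funext i
  have hu : u ⬝ᵥ (Pi.single i 1 - op (u i) • r) = 0 := by
    rw [dotProduct_sub, dotProduct_single_one, dotProduct_smul, hr, op_smul_eq_mul, one_mul,
      sub_self]
  have hv := huv _ hu
  rwa [dotProduct_sub, dotProduct_single_one, dotProduct_smul, op_smul_eq_mul, sub_eq_zero] at hv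

variable {d : ℕ} {u : Fin (d + 1) → R}

theorem exists_dotProduct_eq_zero_and_tail_eq (hu : ∃ s, u 0 * s = 1) (w : Fin d → R) :
    ∃ x : Fin (d + 1) → R, u ⬝ᵥ x = 0 ∧ Fin.tail x = w := by
  obtain ⟨s, hs⟩ := hu
  refine ⟨Fin.cons (-(s * (Fin.tail u ⬝ᵥ w))) w, ?_, Fin.tail_cons _ _⟩
  simp only [dotProduct, Fin.sum_univ_succ, Fin.cons_zero, Fin.cons_succ, mul_neg, ← mul_assoc, hs,
    one_mul, Fin.tail, neg_add_cancel]

theorem exists_dotProduct_eq_zero_and_init_eq (hu : ∃ s, u (Fin.last d) * s = 1) (w : Fin d → R) :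
    ∃ x : Fin (d + 1) → R, u ⬝ᵥ x = 0 ∧ Fin.init x = w := by
  obtain ⟨s, hs⟩ := hu
  refine ⟨Fin.snoc w (-(s * (Fin.init u ⬝ᵥ w))), ?_, Fin.init_snoc _ _⟩
  simp only [dotProduct, Fin.sum_univ_castSucc, Fin.snoc_last, Fin.snoc_castSucc, mul_neg,
    ← mul_assoc, hs, one_mul, Fin.init, add_neg_cancel]

end Rows

theorem window_apply_eq_of_tail_eq_init {X : Type*} {d : ℕ} {W : ℤ → Fin (d + 1) → X}
    (hW : ∀ k, Fin.tail (W k) = Fin.init (W (k + 1))) (k : ℤ) (i : Fin (d + 1)) :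
    W k i = W (k + (i.val : ℤ)) 0 := by
  induction i using Fin.induction generalizing k with
  | zero => simp only [Fin.val_zero, Nat.cast_zero, add_zero]
  | succ i ih =>
    calc W k i.succ = W (k + 1) i.castSucc := congrFun (hW k) i
      _ = W (k + 1 + (i.val : ℤ)) 0 := ih (k + 1)
      _ = W (k + (i.succ.val : ℤ)) 0 := by
        rw [Fin.val_succ, Nat.cast_succ, add_assoc, add_comm (1 : ℤ)]

section DifferenceOperators

variable {R : Type*} [Ring R] {d : ℕ}

/-- The difference operator `(D a) j = ∑ i, α i j * a (j + i)` of degree at most `d`, written as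
the product of the `j`-th coefficient row with the window of `a` that starts at `j`. -/
def differenceOperator (α : Fin (d + 1) → ℤ → R) (a : ℤ → R) (j : ℤ) : R :=
  (α · j) ⬝ᵥ fun i => a (j + (i.val : ℤ))

variable {α : Fin (d + 1) → ℤ → R}

theorem exists_differenceOperator_eq_zero_and_window_eq
    (h0 : ∀ j, ∃ s, α 0 j * s = 1) (hlast : ∀ j, ∃ s, α (Fin.last d) j * s = 1)
    {j : ℤ} {w : Fin (d + 1) → R} (hw : (α · j) ⬝ᵥ w = 0) :
    ∃ a : ℤ → R, differenceOperator α a = 0 ∧ (fun i : Fin (d + 1) => a (j + (i.val : ℤ))) = w := by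
  obtain ⟨W, hWj, hW0, hW⟩ := exists_int_chain_s16
    (P := fun k (x : Fin (d + 1) → R) => (α · k) ⬝ᵥ x = 0) (r := fun x y => Fin.tail x = Fin.init y)
    (fun k x _ => (exists_dotProduct_eq_zero_and_init_eq (hlast (k + 1)) (Fin.tail x)).imp
      fun _ => And.imp_right Eq.symm)
    (fun k y _ => exists_dotProduct_eq_zero_and_tail_eq (h0 k) (Fin.init y)) hw
  have window_eq (k : ℤ) : (fun i : Fin (d + 1) => W (k + (i.val : ℤ)) 0) = W k :=
    funext fun i => (window_apply_eq_of_tail_eq_init hW k i).symm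
  refine ⟨fun k => W k 0, funext fun k => ?_, (window_eq j).trans hWj⟩
  rw [differenceOperator, window_eq]
  exact hW0 k

variable {α' : Fin (d + 1) → ℤ → R}

theorem exists_eq_mul_of_differenceOperator_kernel_subset
    (h0 : ∀ j, ∃ s, α 0 j * s = 1) (hlast : ∀ j, ∃ s, α (Fin.last d) j * s = 1)
    (hker : ∀ a, differenceOperator α a = 0 → differenceOperator α' a = 0) :
    ∃ c : ℤ → R, ∀ i j, α' i j = c j * α i j := by
  have row_annihilates (j : ℤ) (w : Fin (d + 1) → R) (hw : (α · j) ⬝ᵥ w = 0) :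
      (α' · j) ⬝ᵥ w = 0 := by
    obtain ⟨a, ha, rfl⟩ := exists_differenceOperator_eq_zero_and_window_eq h0 hlast hw
    exact congrFun (hker a ha) j
  choose s hs using hlast
  have row_eq_one (j : ℤ) : (α · j) ⬝ᵥ Pi.single (Fin.last d) (s j) = 1 := by
    rw [dotProduct_single, hs]
  exact ⟨fun j => (α' · j) ⬝ᵥ Pi.single (Fin.last d) (s j), fun i j => congrFun
    (eq_dotProduct_smul_of_forall_dotProduct_eq_zero (row_eq_one j) (row_annihilates j)) i⟩

end DifferenceOperators

theorem eq_unit_mul_of_same_kernel_general {R : Type*} [Ring R] {d : ℕ}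
    (α α' : Fin (d + 1) → ℤ → R)
    (h0 : ∀ j, ∃ s, α 0 j * s = 1) (hlast : ∀ j, ∃ s, α (Fin.last d) j * s = 1)
    (hlast' : ∀ j, IsUnit (α' (Fin.last d) j))
    (hker : ∀ a, differenceOperator α a = 0 → differenceOperator α' a = 0) :
    ∃ c : ℤ → Rˣ, ∀ i j, α' i j = (c j : R) * α i j := by
  obtain ⟨c, hc⟩ := exists_eq_mul_of_differenceOperator_kernel_subset h0 hlast hker
  have isUnit_c (j : ℤ) : IsUnit (c j) :=
    isUnit_left_of_isUnit_mul_of_mul_eq_one (hc _ j ▸ hlast' j) (hlast j).choose_spec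
  exact ⟨fun j => (isUnit_c j).unit, hc⟩

/-- Over a stably finite ring, two properly bounded difference
operators of degree `d` with the same kernel differ by left multiplication by a
bi-infinite sequence of units. -/
theorem eq_unit_mul_of_same_kernel
    {R : Type*} [Ring R] (hSF : StablyFinite R) {d : ℕ} (hd : 1 ≤ d)
    (α α' : Fin (d + 1) → ℤ → R)
    (h0 : ∀ j : ℤ, IsUnit (α 0 j)) (hdu : ∀ j : ℤ, IsUnit (α (Fin.last d) j))
    (h0' : ∀ j : ℤ, IsUnit (α' 0 j)) (hdu' : ∀ j : ℤ, IsUnit (α' (Fin.last d) j))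
    (hker : ∀ a : ℤ → R,
      (∀ j : ℤ, ∑ i : Fin (d + 1), α i j * a (j + (i.val : ℤ)) = 0) ↔
      (∀ j : ℤ, ∑ i : Fin (d + 1), α' i j * a (j + (i.val : ℤ)) = 0)) :
    ∃ c : ℤ → Rˣ, ∀ (i : Fin (d + 1)) (j : ℤ), α' i j = (c j : R) * α i j :=
  eq_unit_mul_of_same_kernel_general α α' (fun j => (h0 j).exists_right_inv)
    (fun j => (hdu j).exists_right_inv) hdu' fun a ha => funext ((hker a).1 (congrFun ha))
end

section
/- Let R be a stably finite ring, d ≥ 1, and let α : Fin (d+1) → (ℤ → R) define a properly bounded difference operator of degree d (α 0 j and α d j are units for all j). Let v : ℤ → (Fin d → R) be a sequence of vectors satisfying Σ_{i=0}^{d} (α i j) • v (j + i) = 0 for every j ∈ ℤ (scalar multiplication taken componentwise). For k ∈ ℤ, let V_k ∈ Matrix (Fin d) (Fin d) R be the matrix whose rows are v k, v (k+1), …, v (k+d−1). Then V_k is a unit in the matrix ring for some k ∈ ℤ if and only if V_k is a unit for every k ∈ ℤ. (Equivalently: d consecutive vectors of v form a basis of Fin d → R for some k if and only if they do for all k.)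 -/
/-! Replacing a row of a square matrix by a linear combination of all its rows, in which the
replaced row has a unit coefficient, is left multiplication by an invertible matrix over any ring.
Solving the recurrence for its leading term shows that `V_{k+1}` arises from `V_k` by such a
replacement of the first row followed by a cyclic rotation of the rows, so `V_{k+1}` is a unit
exactly when `V_k` is. -/

section RowOperations

open Matrix

variable {R n : Type*} [Fintype n] [DecidableEq n]

theorem isUnit_submatrix_id_iff [Semiring R] (σ : Equiv.Perm n) (A : Matrix n n R) :
    IsUnit (A.submatrix σ id) ↔ IsUnit A := by
  have hmul (τ : Equiv.Perm n) (B : Matrix n n R) :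
      (1 : Matrix n n R).submatrix τ id * B = B.submatrix τ id := by
    rw [← submatrix_id_id B, ← submatrix_mul _ _ _ _ _ Function.bijective_id,
      Matrix.one_mul, submatrix_id_id]
  let P : (Matrix n n R)ˣ :=
    { val := (1 : Matrix n n R).submatrix σ id
      inv := (1 : Matrix n n R).submatrix σ.symm id
      val_inv := by simp [hmul]
      inv_val := by simp [hmul] }
  rw [← hmul σ A]
  exact P.isUnit_units_mul A

variable [Ring R]

theorem vecMul_updateRow {m : Type*} (c : n → R) (A : Matrix n m R) (i : n) (b : m → R) :
    c ᵥ* A.updateRow i b = c ᵥ* A + c i • (b - A i) := by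
  have hupdate : A.updateRow i b = A + vecMulVec (Pi.single i 1) (b - A i) := by
    ext j l
    obtain rfl | hj := eq_or_ne j i
    · simp [vecMulVec_apply]
    · simp [vecMulVec_apply, hj]
  rw [hupdate, vecMul_add, vecMul_vecMulVec, dotProduct_single_one]

theorem isUnit_updateRow_one {i : n} {c : n → R} (hc : IsUnit (c i)) :
    IsUnit ((1 : Matrix n n R).updateRow i c) := by
  obtain ⟨u, hu⟩ := hc
  let e : n → R := (1 : Matrix n n R) i
  -- The `i`-th row `b` of the inverse is forced by the equation `c + c i • (b - e) = e`.
  let b : n → R := e + (↑u⁻¹ : R) • (e - c)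
  have hb : b i = ↑u⁻¹ := by simp [b, e, ← hu, mul_sub]
  have hcb : c ᵥ* (1 : Matrix n n R).updateRow i b = e := by
    rw [vecMul_updateRow, vecMul_one, ← hu]
    simp [b, e, smul_smul]
  have hbc : b ᵥ* (1 : Matrix n n R).updateRow i c = e := by
    rw [vecMul_updateRow, vecMul_one, hb, add_assoc, ← smul_add]
    simp [e]
  refine isUnit_iff_exists.mpr ⟨(1 : Matrix n n R).updateRow i b, ?_, ?_⟩
  · rw [updateRow_mul, Matrix.one_mul, updateRow_idem, hcb, updateRow_eq_self]
  · rw [updateRow_mul, Matrix.one_mul, updateRow_idem, hbc, updateRow_eq_self]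

theorem isUnit_updateRow_vecMul_iff {i : n} {c : n → R} (hc : IsUnit (c i)) (A : Matrix n n R) :
    IsUnit (A.updateRow i (c ᵥ* A)) ↔ IsUnit A := by
  obtain ⟨u, hu⟩ := isUnit_updateRow_one hc
  have hfactor : A.updateRow i (c ᵥ* A) = u.val * A := by
    rw [hu, updateRow_mul, Matrix.one_mul]
  rw [hfactor, u.isUnit_units_mul]

theorem isUnit_updateRow_iff_of_vecMul_add_smul_eq_zero {i : n} {c : n → R} {a : R}
    (hc : IsUnit (c i)) (ha : IsUnit a) {A : Matrix n n R} {w : n → R}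
    (h : c ᵥ* A + a • w = 0) : IsUnit (A.updateRow i w) ↔ IsUnit A := by
  obtain ⟨u, rfl⟩ := ha
  have hw : w = (-(↑u⁻¹ : R) • c) ᵥ* A := by
    rw [smul_vecMul, eq_neg_of_add_eq_zero_left h]
    simp [smul_smul]
  rw [hw]
  exact isUnit_updateRow_vecMul_iff (c := -(↑u⁻¹ : R) • c) (u⁻¹.isUnit.neg.mul hc) A

end RowOperations

/-- The matrix `V_k` of the `d` consecutive vectors `v k, …, v (k + d - 1)`, written as rows. It is
named after the Casorati matrix, the analogue for difference equations of the Wronskian matrix. -/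
def casoratiMatrix {R ι : Type*} (d : ℕ) (v : ℤ → ι → R) (k : ℤ) : Matrix (Fin d) ι R :=
  Matrix.of fun i : Fin d => v (k + (i.val : ℤ))

theorem casoratiMatrix_add_one {R ι : Type*} (d : ℕ) (v : ℤ → ι → R) (k : ℤ) :
    casoratiMatrix (d + 1) v (k + 1) =
      ((casoratiMatrix (d + 1) v k).updateRow 0 (v (k + (d + 1 : ℕ)))).submatrix
        (finRotate (d + 1)) id := by
  ext i l
  induction i using Fin.lastCases with
  | last => simp [casoratiMatrix, add_assoc, add_comm (1 : ℤ)]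
  | cast i =>
    have hi : finRotate (d + 1) i.castSucc = i.succ := by simp
    simp [casoratiMatrix, hi, Fin.succ_ne_zero, add_assoc, add_comm (1 : ℤ)]

open Matrix in
theorem isUnit_casoratiMatrix_add_one_iff {R : Type*} [Ring R] {d : ℕ} {a : Fin (d + 1) → R}
    (h0 : IsUnit (a 0)) (hd : IsUnit (a (Fin.last d))) {v : ℤ → Fin d → R} {k : ℤ}
    (hv : ∑ i : Fin (d + 1), a i • v (k + (i.val : ℤ)) = 0) :
    IsUnit (casoratiMatrix d v (k + 1)) ↔ IsUnit (casoratiMatrix d v k) := by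
  cases d with
  | zero => simp only [isUnit_of_subsingleton]
  | succ d =>
    have hrel : Fin.init a ᵥ* casoratiMatrix (d + 1) v k +
        a (Fin.last (d + 1)) • v (k + (d + 1 : ℕ)) = 0 := by
      rw [vecMul_eq_sum]
      exact (Fin.sum_univ_castSucc _).symm.trans hv
    rw [casoratiMatrix_add_one, isUnit_submatrix_id_iff]
    exact isUnit_updateRow_iff_of_vecMul_add_smul_eq_zero (i := 0) (c := Fin.init a) h0 hd hrel

theorem wronskian_isUnit_iff_forall_general {R : Type*} [Ring R] {d : ℕ}
    (α : Fin (d + 1) → ℤ → R)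
    (h0 : ∀ j : ℤ, IsUnit (α 0 j)) (hdu : ∀ j : ℤ, IsUnit (α (Fin.last d) j))
    (v : ℤ → Fin d → R)
    (hv : ∀ j : ℤ, ∑ i : Fin (d + 1), α i j • v (j + (i.val : ℤ)) = 0) :
    (∃ k : ℤ, IsUnit (casoratiMatrix d v k)) ↔ ∀ k : ℤ, IsUnit (casoratiMatrix d v k) := by
  have hper : Function.Periodic (fun k : ℤ => IsUnit (casoratiMatrix d v k)) 1 := fun k =>
    propext (isUnit_casoratiMatrix_add_one_iff (h0 k) (hdu k) (hv k))
  have hzero (k : ℤ) : IsUnit (casoratiMatrix d v k) ↔ IsUnit (casoratiMatrix d v 0) := by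
    simpa only [Int.cast_id, mul_one] using (hper.int_mul_eq k).to_iff
  simp only [hzero, exists_const, forall_const]

/-- (Wronskian-type statement.) Over a stably finite ring, if a
sequence of vectors `v : ℤ → (Fin d → R)` is annihilated by a properly bounded
difference operator of degree `d`, then the matrix `V_k` with rows
`v k, …, v (k + d - 1)` is a unit for some `k` iff it is a unit for every `k`. -/
theorem wronskian_isUnit_iff_forall
    {R : Type*} [Ring R] (hSF : StablyFinite R) {d : ℕ} (hd : 1 ≤ d)
    (α : Fin (d + 1) → ℤ → R)
    (h0 : ∀ j : ℤ, IsUnit (α 0 j)) (hdu : ∀ j : ℤ, IsUnit (α (Fin.last d) j))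
    (v : ℤ → Fin d → R)
    (hv : ∀ j : ℤ, ∑ i : Fin (d + 1), α i j • v (j + (i.val : ℤ)) = 0) :
    (∃ k : ℤ, IsUnit (Matrix.of (fun i : Fin d => v (k + (i.val : ℤ))) :
        Matrix (Fin d) (Fin d) R)) ↔
      (∀ k : ℤ, IsUnit (Matrix.of (fun i : Fin d => v (k + (i.val : ℤ))) :
        Matrix (Fin d) (Fin d) R)) :=
  wronskian_isUnit_iff_forall_general α h0 hdu v hv
end

section
/- Let R be a ring, n ≥ 1, and let α, β : ℤ → R be n-periodic sequences, i.e. α (i + n) = α i and β (i + n) = β i for all i ∈ ℤ. Then for every k ∈ ℤ, the element (Σ_{i=1}^{n} α i * β (i + k)) − (Σ_{i=1}^{n} β i * α (i − k)) of R lies in the additive subgroup [R, R] of R generated by all commutators a*b − b*a with a, b ∈ R. (This is the cyclic property Tr(Q Q̂) = Tr(Q̂ Q) of the trace of n-periodic pseudo-difference operators, for the monomial operators Q = α T^k and Q̂ = β T^{−k}.) -/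
/-!
The sequence `j ↦ β j * α (j - k)` is `n`-periodic, so its sum over a full period does not depend on
where the period starts. Starting the second sum `k` places later turns its `i`-th term into
`β (i + k) * α i`, which differs from the `i`-th term of the first sum by a commutator.
-/

open Finset

theorem periodic_sum_range_add_nsmul {A M : Type*} [AddMonoid A] [AddCommMonoid M] {f : A → M}
    {n : ℕ} {a : A} (hf : Function.Periodic f (n • a)) :
    Function.Periodic (fun x => ∑ i ∈ range n, f (x + i • a)) a := by
  intro x
  cases n with
  | zero => simp only [range_zero, sum_empty]
  | succ m =>
    calc ∑ i ∈ range (m + 1), f (x + a + i • a)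
        = ∑ i ∈ range (m + 1), f (x + (i + 1) • a) := by simp only [add_assoc, succ_nsmul']
      _ = ∑ i ∈ range m, f (x + (i + 1) • a) + f (x + (m + 1) • a) := sum_range_succ _ _
      _ = ∑ i ∈ range m, f (x + (i + 1) • a) + f (x + 0 • a) := by rw [hf x, zero_nsmul, add_zero]
      _ = ∑ i ∈ range (m + 1), f (x + i • a) := (sum_range_succ' (fun i => f (x + i • a)) m).symm

theorem sum_range_add_eq_sum_range_add_of_periodic {M : Type*} [AddCommMonoid M] {f : ℤ → M}
    {n : ℕ} (hf : Function.Periodic f (n : ℤ)) (c d : ℤ) :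
    ∑ i ∈ range n, f (i + c) = ∑ i ∈ range n, f (i + d) := by
  have hsum : Function.Periodic (fun x : ℤ => ∑ i ∈ range n, f (i + x)) 1 := by
    simpa only [nsmul_one, add_comm] using
      periodic_sum_range_add_nsmul (a := (1 : ℤ)) (by rwa [nsmul_one])
  simpa only [Int.cast_id, mul_one, add_sub_cancel] using hsum.int_mul (c - d) d

theorem sum_mul_sub_sum_mul_mem_closure_commutators {ι R : Type*} [NonUnitalNonAssocRing R]
    (s : Finset ι) (f g : ι → R) :
    ∑ i ∈ s, f i * g i - ∑ i ∈ s, g i * f i ∈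
      AddSubgroup.closure {x : R | ∃ a b : R, x = a * b - b * a} := by
  rw [← sum_sub_distrib]
  exact sum_mem fun i _ => AddSubgroup.subset_closure ⟨f i, g i, rfl⟩

theorem trace_cyclic_property_general {R : Type*} [NonUnitalNonAssocRing R] {n : ℕ} {α β : ℤ → R}
    (hα : Function.Periodic α (n : ℤ)) (hβ : Function.Periodic β (n : ℤ)) (k : ℤ) :
    (∑ i ∈ range n, α ((i : ℤ) + 1) * β (((i : ℤ) + 1) + k)) -
      (∑ i ∈ range n, β ((i : ℤ) + 1) * α (((i : ℤ) + 1) - k)) ∈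
        AddSubgroup.closure {x : R | ∃ a b : R, x = a * b - b * a} := by
  have hshift : ∑ i ∈ range n, β ((i : ℤ) + 1) * α ((i : ℤ) + 1 - k) =
      ∑ i ∈ range n, β ((i : ℤ) + 1 + k) * α ((i : ℤ) + 1) := by
    simpa only [Pi.mul_apply, ← add_assoc, add_sub_cancel_right] using
      sum_range_add_eq_sum_range_add_of_periodic (hβ.mul (hα.sub_const k)) 1 (1 + k)
  rw [hshift]
  exact sum_mul_sub_sum_mul_mem_closure_commutators _ _ _

/-- Cyclic property of the trace of `n`-periodic pseudo-difference
operators: for `n`-periodic sequences `α, β : ℤ → R` and any `k ∈ ℤ`, the element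
`(Σ_{i=1}^{n} α i * β (i + k)) − (Σ_{i=1}^{n} β i * α (i − k))` lies in the
additive subgroup `[R, R]` generated by commutators. -/
theorem trace_cyclic_property
    {R : Type*} [Ring R] {n : ℕ} (hn : 1 ≤ n) (α β : ℤ → R)
    (hα : ∀ i : ℤ, α (i + (n : ℤ)) = α i) (hβ : ∀ i : ℤ, β (i + (n : ℤ)) = β i)
    (k : ℤ) :
    (∑ i ∈ Finset.range n, α ((i : ℤ) + 1) * β (((i : ℤ) + 1) + k)) -
      (∑ i ∈ Finset.range n, β ((i : ℤ) + 1) * α (((i : ℤ) + 1) - k)) ∈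
        AddSubgroup.closure {x : R | ∃ a b : R, x = a * b - b * a} :=
  trace_cyclic_property_general hα hβ k
end
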